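/- arXiv:2301.00398 — 2 statements merged into one kernel-verified Lean document; each statement's English description precedes it below -/
import Mathlib

section
/- For every integer d ≥ 1, the limit γ_d := lim_{N→∞} (1/log N) · Σ_{z∈ℤ^d, 0<‖z‖≤N} z₁ p(z) exists and is a finite strictly positive real number, where p is the kernel with exponent α = 1. -/
/-- Euclidean norm of a point of `ℤ^d`. -/
noncomputable def znorm (d : ℕ) (z : Fin d → ℤ) : ℝ :=
  Real.sqrt (∑ i, ((z i : ℝ)) ^ 2)

/-- The jump kernel `p(z) = ‖z‖^{-(d+α)} (2·1_{z₁>0} + 1_{z₁=0})`, `p(0) = 0`. -/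
noncomputable def pker (d : ℕ) [NeZero d] (α : ℝ) (z : Fin d → ℤ) : ℝ :=
  if z = 0 then 0
  else znorm d z ^ (-((d : ℝ) + α)) *
    ((if 0 < z 0 then (2 : ℝ) else 0) + (if z 0 = 0 then 1 else 0))

open Filter MeasureTheory Topology
open scoped Pointwise

/-- If a monotone sequence has dyadic increments converging to `c`, then it grows like
`(c / log 2) * log N`. -/
theorem tendsto_inv_log_mul_of_dyadic {F : ℕ → ℝ} (hF : Monotone F) {c : ℝ}
    (h : Tendsto (fun k : ℕ => F (2 ^ (k + 1)) - F (2 ^ k)) atTop (𝓝 c)) :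
    Tendsto (fun N : ℕ => (Real.log N)⁻¹ * F N) atTop (𝓝 (c * (Real.log 2)⁻¹)) := by
  have hinv : Tendsto (fun k : ℕ => ((k : ℝ))⁻¹) atTop (𝓝 0) := tendsto_inv_atTop_nhds_zero_nat
  have hG : Tendsto (fun k : ℕ => (k : ℝ)⁻¹ * F (2 ^ k)) atTop (𝓝 c) := by
    have h1 := h.cesaro.add (hinv.mul_const (F (2 ^ 0)))
    simp only [zero_mul, add_zero] at h1
    refine h1.congr fun k => ?_
    rw [Finset.sum_range_sub (fun k => F (2 ^ k))]
    ring
  have hlog : Tendsto (fun N : ℕ => Real.log N) atTop atTop :=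
    Real.tendsto_log_atTop.comp tendsto_natCast_atTop_atTop
  have hlogb : Tendsto (fun N : ℕ => Real.logb 2 N) atTop atTop :=
    (Real.tendsto_logb_atTop one_lt_two).comp tendsto_natCast_atTop_atTop
  have hK : Tendsto (fun N : ℕ => Nat.log 2 N) atTop atTop := by
    refine (tendsto_nat_floor_atTop.comp hlogb).congr fun N => ?_
    simpa using Real.natFloor_logb_natCast 2 N
  have hKlog : Tendsto (fun N : ℕ => (Nat.log 2 N : ℝ) * (Real.log N)⁻¹) atTop
      (𝓝 (Real.log 2)⁻¹) := by
    have h1 := ((tendsto_nat_floor_div_atTop (R := ℝ)).comp hlogb).mul_const (Real.log 2)⁻¹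
    rw [one_mul] at h1
    refine h1.congr fun N => ?_
    have h2 : ⌊Real.logb 2 N⌋₊ = Nat.log 2 N := by simpa using Real.natFloor_logb_natCast 2 N
    have h3 : Real.log 2 ≠ 0 := (Real.log_pos one_lt_two).ne'
    simp only [Function.comp_apply, h2]
    rw [Real.logb]
    field_simp
  have hK1log : Tendsto (fun N : ℕ => ((Nat.log 2 N + 1 : ℕ) : ℝ) * (Real.log N)⁻¹) atTop
      (𝓝 (Real.log 2)⁻¹) := by
    have h1 := hKlog.add hlog.inv_tendsto_atTop
    rw [add_zero] at h1
    refine h1.congr fun N => ?_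
    push_cast
    simp only [Pi.inv_apply]
    ring
  have hlow := (hG.comp hK).mul hKlog
  have hupp := (hG.comp ((tendsto_add_atTop_nat 1).comp hK)).mul hK1log
  refine tendsto_of_tendsto_of_tendsto_of_le_of_le' hlow hupp ?_ ?_
  · filter_upwards [eventually_ge_atTop 2] with N hN
    have hpos : (0 : ℝ) < Nat.log 2 N := by exact_mod_cast Nat.log_pos one_lt_two hN
    have hl : 0 ≤ (Real.log N)⁻¹ := inv_nonneg.2 (Real.log_natCast_nonneg N)
    have hle : F (2 ^ Nat.log 2 N) ≤ F N := hF (Nat.pow_log_le_self 2 (by omega))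
    calc _ = (Real.log N)⁻¹ * F (2 ^ Nat.log 2 N) := by
            simp only [Function.comp_apply]
            field_simp
      _ ≤ _ := by gcongr
  · filter_upwards [eventually_ge_atTop 2] with N hN
    have hpos : (0 : ℝ) < (Nat.log 2 N + 1 : ℕ) := by positivity
    have hl : 0 ≤ (Real.log N)⁻¹ := inv_nonneg.2 (Real.log_natCast_nonneg N)
    have hle : F N ≤ F (2 ^ (Nat.log 2 N + 1)) :=
      hF (Nat.lt_pow_succ_log_self one_lt_two N).le
    calc _ ≤ (Real.log N)⁻¹ * F (2 ^ (Nat.log 2 N + 1)) := by gcongr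
      _ = _ := by
            simp only [Function.comp_apply]
            field_simp

section Annulus

variable {d : ℕ}

theorem convexOn_sum_sq : ConvexOn ℝ Set.univ (fun x : Fin d → ℝ => ∑ i, x i ^ 2) := by
  refine ⟨convex_univ, fun x _ y _ a b ha hb hab => ?_⟩
  simp only [smul_eq_mul, Finset.mul_sum, ← Finset.sum_add_distrib, Pi.add_apply, Pi.smul_apply]
  refine Finset.sum_le_sum fun i _ => ?_
  obtain rfl : b = 1 - a := by linarith
  nlinarith [mul_nonneg (mul_nonneg ha hb) (sq_nonneg (x i - y i))]

theorem continuous_sum_sq : Continuous (fun x : Fin d → ℝ => ∑ i, x i ^ 2) := by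
  fun_prop

/-- The annulus `1 < ‖x‖ ≤ 2` in `ℝ^d`. -/
def annulus (d : ℕ) : Set (Fin d → ℝ) := {x | 1 < ∑ i, x i ^ 2 ∧ ∑ i, x i ^ 2 ≤ 4}

theorem measurableSet_annulus : MeasurableSet (annulus d) :=
  (measurableSet_lt measurable_const continuous_sum_sq.measurable).inter
    (measurableSet_le continuous_sum_sq.measurable measurable_const)

theorem annulus_subset_Icc : annulus d ⊆ Set.Icc (fun _ => -2) (fun _ => 2) := by
  intro x hx
  have h (i : Fin d) : |x i| ≤ 2 := by
    refine abs_le_of_sq_le_sq ?_ zero_le_two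
    have := Finset.single_le_sum (f := fun i => x i ^ 2) (fun i _ => sq_nonneg (x i))
      (Finset.mem_univ i)
    have := hx.2
    linarith
  exact ⟨fun i => (abs_le.1 (h i)).1, fun i => (abs_le.1 (h i)).2⟩

theorem volume_frontier_annulus : volume (frontier (annulus d)) = 0 := by
  have hc (r : ℝ) : volume (frontier {x : Fin d → ℝ | ∑ i, x i ^ 2 ≤ r}) = 0 := by
    have := (convexOn_sum_sq (d := d)).convex_le r
    simp only [Set.mem_univ, true_and] at this
    exact this.addHaar_frontier volume
  have heq : annulus d = {x : Fin d → ℝ | ∑ i, x i ^ 2 ≤ 1}ᶜ ∩ {x | ∑ i, x i ^ 2 ≤ 4} := by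
    ext x
    simp [annulus]
  rw [heq]
  refine measure_mono_null (frontier_inter_subset _ _) ?_
  rw [measure_union_null_iff, frontier_compl]
  exact ⟨measure_mono_null Set.inter_subset_left (hc 1),
    measure_mono_null Set.inter_subset_right (hc 4)⟩

theorem finite_znorm_le (R : ℝ) : {z : Fin d → ℤ | znorm d z ≤ R}.Finite := by
  refine (Set.finite_Icc (fun _ => -⌈R⌉) (fun _ => ⌈R⌉)).subset fun z hz => ?_
  have h (i : Fin d) : |z i| ≤ ⌈R⌉ := by
    have h1 : |(z i : ℝ)| ≤ znorm d z :=
      Real.abs_le_sqrt (Finset.single_le_sum (f := fun i => (z i : ℝ) ^ 2)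
        (fun i _ => sq_nonneg _) (Finset.mem_univ i))
    have h2 : ((|z i| : ℤ) : ℝ) ≤ ⌈R⌉ := by
      push_cast
      exact (h1.trans hz).trans (Int.le_ceil R)
    exact_mod_cast h2
  exact ⟨fun i => (abs_le.1 (h i)).1, fun i => (abs_le.1 (h i)).2⟩

/-- The lattice points of `n⁻¹ ℤ^d` in the annulus. -/
theorem annulus_inter_lattice {n : ℕ} (hn : 0 < n) :
    annulus d ∩ (n : ℝ)⁻¹ • (Submodule.span ℤ (Set.range (Pi.basisFun ℝ (Fin d))) :
      Set (Fin d → ℝ)) =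
    Set.image (fun (z : Fin d → ℤ) (i : Fin d) => (n : ℝ)⁻¹ * z i)
      {z | (n : ℝ) < znorm d z ∧ znorm d z ≤ (2 * n : ℕ)} := by
  have hn' : (0 : ℝ) < n := by exact_mod_cast hn
  have hmem (z : Fin d → ℤ) : (fun i => (n : ℝ)⁻¹ * z i) ∈ annulus d ↔
      (n : ℝ) < znorm d z ∧ znorm d z ≤ (2 * n : ℕ) := by
    simp only [annulus, Set.mem_ofPred_eq, mul_pow, ← Finset.mul_sum, znorm]
    rw [Real.lt_sqrt hn'.le, Real.sqrt_le_left (by positivity), inv_pow,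
      ← div_eq_inv_mul, one_lt_div (by positivity), div_le_iff₀ (by positivity)]
    push_cast
    ring_nf
  ext x
  constructor
  · rintro ⟨hx, y, hy, rfl⟩
    simp only [SetLike.mem_coe] at hy
    rw [Module.Basis.mem_span_iff_repr_mem] at hy
    simp only [Pi.basisFun_repr] at hy
    choose z hz using hy
    have hxz : (n : ℝ)⁻¹ • y = fun i => (n : ℝ)⁻¹ * z i := by
      ext i
      simp [← hz i]
    exact ⟨z, (hmem z).1 (hxz ▸ hx), hxz.symm⟩
  · rintro ⟨z, hz, rfl⟩
    refine ⟨(hmem z).2 hz, fun i => (z i : ℝ), ?_, rfl⟩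
    simp only [SetLike.mem_coe]
    rw [Module.Basis.mem_span_iff_repr_mem]
    exact fun i => ⟨z i, by simp⟩

end Annulus

section Kernel

variable {d : ℕ} [NeZero d]

/-- A continuous function on `ℝ^d` that equals `2 x₁⁺ ‖x‖^{-(d+1)}` for `‖x‖ ≥ 1`. -/
noncomputable def driftDensity (d : ℕ) [NeZero d] (x : Fin d → ℝ) : ℝ :=
  2 * max (x 0) 0 / Real.sqrt (max 1 (∑ i, x i ^ 2)) ^ (d + 1)

theorem continuous_driftDensity : Continuous (driftDensity d) := by
  refine Continuous.div (by fun_prop) (by fun_prop) fun x => ?_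
  have : 0 < max 1 (∑ i, x i ^ 2) := lt_max_of_lt_left one_pos
  positivity

theorem driftDensity_nonneg (x : Fin d → ℝ) : 0 ≤ driftDensity d x := by
  unfold driftDensity
  positivity

theorem setIntegral_driftDensity_pos : 0 < ∫ x in annulus d, driftDensity d x := by
  have hint : IntegrableOn (driftDensity d) (annulus d) :=
    (continuous_driftDensity.continuousOn.integrableOn_compact isCompact_Icc).mono_set
      annulus_subset_Icc
  rw [setIntegral_pos_iff_support_of_nonneg_ae
    (Eventually.of_forall driftDensity_nonneg) hint]
  let U : Set (Fin d → ℝ) := {x | 0 < x 0 ∧ 1 < ∑ i, x i ^ 2 ∧ ∑ i, x i ^ 2 < 4}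
  have hU : IsOpen U :=
    (isOpen_lt continuous_const (continuous_apply 0)).inter
      ((isOpen_lt continuous_const continuous_sum_sq).inter
        (isOpen_lt continuous_sum_sq continuous_const))
  have hne : U.Nonempty := by
    refine ⟨Pi.single 0 (3 / 2), ?_⟩
    have : ∑ i : Fin d, (Pi.single 0 (3 / 2) : Fin d → ℝ) i ^ 2 = 9 / 4 := by
      rw [Finset.sum_eq_single 0] <;> norm_num +contextual [Pi.single_apply]
    simp only [U, Set.mem_ofPred_eq, this]
    norm_num
  refine (hU.measure_pos volume hne).trans_le (measure_mono fun x hx => ⟨?_, hx.2.1, hx.2.2.le⟩)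
  have h1 : 0 < max 1 (∑ i, x i ^ 2) := lt_max_of_lt_left one_pos
  have h2 : 0 < max (x 0) 0 := lt_max_of_lt_left hx.1
  refine ne_of_gt ?_
  unfold driftDensity
  positivity

theorem mul_pker_one (z : Fin d → ℤ) :
    (z 0 : ℝ) * pker d 1 z = 2 * max (z 0 : ℝ) 0 / znorm d z ^ (d + 1) := by
  by_cases hz : z = 0
  · simp [hz]
  have hn : 0 ≤ znorm d z := Real.sqrt_nonneg _
  have hpow : znorm d z ^ (-((d : ℝ) + 1)) = (znorm d z ^ (d + 1))⁻¹ := by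
    rw [Real.rpow_neg hn]
    exact_mod_cast congrArg _ (Real.rpow_natCast (znorm d z) (d + 1))
  rw [pker, if_neg hz, hpow]
  rcases lt_trichotomy (z 0) 0 with h | h | h
  · have : (z 0 : ℝ) ≤ 0 := by exact_mod_cast h.le
    simp [h.not_gt, h.ne, max_eq_right this]
  · simp [h]
  · have : (0 : ℝ) ≤ z 0 := by exact_mod_cast h.le
    simp only [h, h.ne', if_true, if_false, max_eq_left this]
    ring

/-- The truncated drift `Σ_{‖z‖ ≤ N} z₁ p(z)` as a finite sum. -/
noncomputable def truncatedDrift (d : ℕ) [NeZero d] (N : ℕ) : ℝ :=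
  ∑ z ∈ (finite_znorm_le (d := d) N).toFinset, (z 0 : ℝ) * pker d 1 z

theorem tsum_eq_truncatedDrift (N : ℕ) :
    ∑' z : Fin d → ℤ, (if z ≠ 0 ∧ znorm d z ≤ (N : ℝ) then (z 0 : ℝ) * pker d 1 z else 0) =
      truncatedDrift d N := by
  rw [tsum_eq_sum (s := (finite_znorm_le (d := d) N).toFinset)]
  · refine Finset.sum_congr rfl fun z hz => ?_
    have hz' : znorm d z ≤ N := by simpa using hz
    by_cases h0 : z = 0 <;> simp [h0, hz']
  · intro z hz
    have hz' : ¬ znorm d z ≤ N := by simpa using hz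
    simp [hz']

theorem mul_pker_one_nonneg (z : Fin d → ℤ) : 0 ≤ (z 0 : ℝ) * pker d 1 z := by
  rw [mul_pker_one]
  have : 0 ≤ znorm d z := Real.sqrt_nonneg _
  positivity

theorem monotone_truncatedDrift : Monotone (truncatedDrift d) := by
  intro M N h
  refine Finset.sum_le_sum_of_subset_of_nonneg ?_ fun z _ _ => mul_pker_one_nonneg z
  rw [Set.Finite.toFinset_subset_toFinset]
  exact fun z (hz : znorm d z ≤ M) => hz.trans (Nat.cast_le.2 h)

theorem driftDensity_inv_mul {n : ℕ} (hn : 0 < n) {z : Fin d → ℤ} (hz : (n : ℝ) < znorm d z) :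
    driftDensity d (fun i => (n : ℝ)⁻¹ * z i) / n ^ d = (z 0 : ℝ) * pker d 1 z := by
  have hn' : (0 : ℝ) < n := by exact_mod_cast hn
  have hsum : ∑ i, ((n : ℝ)⁻¹ * z i) ^ 2 = ((n : ℝ)⁻¹ * znorm d z) ^ 2 := by
    rw [mul_pow, znorm, Real.sq_sqrt (Finset.sum_nonneg fun i _ => sq_nonneg _), Finset.mul_sum]
    simp only [mul_pow]
  have hone : 1 ≤ (n : ℝ)⁻¹ * znorm d z := by
    rw [← div_eq_inv_mul, one_le_div hn']
    exact hz.le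
  have hmax : max ((n : ℝ)⁻¹ * z 0) 0 = (n : ℝ)⁻¹ * max (z 0 : ℝ) 0 := by
    rw [mul_max_of_nonneg _ _ (inv_nonneg.2 hn'.le), mul_zero]
  have hz0 : znorm d z ≠ 0 := (hn'.trans hz).ne'
  rw [mul_pker_one, driftDensity, hsum, max_eq_right (one_le_pow₀ hone),
    Real.sqrt_sq (zero_le_one.trans hone), hmax, mul_pow, inv_pow]
  field_simp
  ring

theorem truncatedDrift_two_mul_sub {n : ℕ} (hn : 0 < n) :
    truncatedDrift d (2 * n) - truncatedDrift d n =
      (∑' x : ↑(annulus d ∩ (n : ℝ)⁻¹ •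
        (Submodule.span ℤ (Set.range (Pi.basisFun ℝ (Fin d))) : Set (Fin d → ℝ))),
          driftDensity d x) / n ^ Fintype.card (Fin d) := by
  classical
  have hn' : (0 : ℝ) < n := by exact_mod_cast hn
  have hinj : Function.Injective
      (fun (z : Fin d → ℤ) (i : Fin d) => (n : ℝ)⁻¹ * z i) := by
    intro z w h
    ext i
    simpa [hn'.ne'] using congrFun h i
  set T := (finite_znorm_le (d := d) (2 * n : ℕ)).toFinset \
    (finite_znorm_le (d := d) n).toFinset with hT
  have hcoe : {z : Fin d → ℤ | (n : ℝ) < znorm d z ∧ znorm d z ≤ (2 * n : ℕ)} = ↑T := by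
    ext z
    simp [hT, and_comm]
  have hsub : (finite_znorm_le (d := d) n).toFinset ⊆
      (finite_znorm_le (d := d) (2 * n : ℕ)).toFinset := by
    rw [Set.Finite.toFinset_subset_toFinset]
    exact fun z (hz : znorm d z ≤ n) =>
      hz.trans (Nat.cast_le.2 (Nat.le_mul_of_pos_left n two_pos))
  rw [annulus_inter_lattice hn, tsum_image _ hinj.injOn, hcoe,
    Finset.tsum_subtype' T (fun z => driftDensity d (fun i => (n : ℝ)⁻¹ * z i)),
    Finset.sum_div, Fintype.card_fin, truncatedDrift, truncatedDrift,
    ← Finset.sum_sdiff hsub, add_sub_cancel_right]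
  refine Finset.sum_congr rfl fun z hz => (driftDensity_inv_mul hn ?_).symm
  have hz' : z ∈ (T : Set (Fin d → ℤ)) := hz
  rw [← hcoe] at hz'
  exact hz'.1

theorem tendsto_truncatedDrift_dyadic :
    Tendsto (fun k : ℕ => truncatedDrift d (2 ^ (k + 1)) - truncatedDrift d (2 ^ k)) atTop
      (𝓝 (∫ x in annulus d, driftDensity d x)) := by
  have h := tendsto_tsum_div_pow_atTop_integral (annulus d) (driftDensity d)
    continuous_driftDensity
    ((Metric.isBounded_Icc _ _).subset annulus_subset_Icc) measurableSet_annulus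
    volume_frontier_annulus
  refine (h.comp (tendsto_pow_atTop_atTop_of_one_lt (one_lt_two (α := ℕ)))).congr fun k => ?_
  rw [pow_succ', truncatedDrift_two_mul_sub (by positivity)]
  rfl

end Kernel

/-- for `α = 1`, the limit
`γ_d = lim_{N→∞} (1/log N) Σ_{0<‖z‖≤N} z₁ p(z)` exists and is strictly positive. -/
theorem statement0 (d : ℕ) [NeZero d] (hd : 1 ≤ d) :
    ∃ γ : ℝ, 0 < γ ∧
      Filter.Tendsto
        (fun N : ℕ => (Real.log N)⁻¹ *
          ∑' z : Fin d → ℤ,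
            (if z ≠ 0 ∧ znorm d z ≤ (N : ℝ) then (z 0 : ℝ) * pker d 1 z else 0))
        Filter.atTop (nhds γ) := by
  refine ⟨_, mul_pos (setIntegral_driftDensity_pos (d := d))
    (inv_pos.2 (Real.log_pos one_lt_two)), ?_⟩
  simp only [tsum_eq_truncatedDrift]
  exact tendsto_inv_log_mul_of_dyadic monotone_truncatedDrift tendsto_truncatedDrift_dyadic
end

section
/- Let d ≥ 1, α > 0 and n ≥ 1. There exists a finite constant C = C(d,n,α) such that for every finitely supported function 𝔣 : ℰ_{d,n} → ℝ, Σ_{z∈ℤ^d, z≠0} Σ_{A∈ℰ_{d,n}} s(z) (𝔣(θ_{−z}A) − 𝔣(A))² ≤ C · Σ_{x,y∈ℤ^d, x≠0, y≠0} Σ_{A∈ℰ_{d,n}} s(y−x) (𝔣(A_{x,y}) − 𝔣(A))². -/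
/-- The normalizing constant `s* = Σ_{x≠0} ‖x‖^{-(d+α)}`. -/
noncomputable def sstar (d : ℕ) (α : ℝ) : ℝ :=
  ∑' x : Fin d → ℤ, if x = 0 then 0 else znorm d x ^ (-((d : ℝ) + α))

/-- The step distribution `s(x) = ‖x‖^{-(d+α)}/s*` on `ℤ^d`, `s(0) = 0`. -/
noncomputable def sfun (d : ℕ) (α : ℝ) (x : Fin d → ℤ) : ℝ :=
  if x = 0 then 0 else znorm d x ^ (-((d : ℝ) + α)) / sstar d α

/-- `A_{x,y}`: exchange `x` and `y` in the finite set `A`. -/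
def swapSet {d : ℕ} (x y : Fin d → ℤ) (A : Finset (Fin d → ℤ)) : Finset (Fin d → ℤ) :=
  if x ∈ A ∧ y ∉ A then insert y (A.erase x)
  else if y ∈ A ∧ x ∉ A then insert x (A.erase y)
  else A

/-- `θ_{−z}A`: the translate `A − z` if `z ∉ A`, and `((A − z) \ {0}) ∪ {−z}` if `z ∈ A`. -/
def shiftSet {d : ℕ} (z : Fin d → ℤ) (A : Finset (Fin d → ℤ)) : Finset (Fin d → ℤ) :=
  if z ∈ A then insert (-z) ((A.image (fun a => a - z)).erase 0)
  else A.image (fun a => a - z)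

open scoped ENNReal

/-- The bijection of `ℤ^d \ {0}` induced by a jump of the tagged particle from `0` to `z`. -/
def jumpMap {d : ℕ} (z a : Fin d → ℤ) : Fin d → ℤ :=
  if a = z then -z else a - z

/-- An injective key on `ℤ^d` into a linear order, strictly decreased by `jumpMap z`. -/
def jumpKey {d : ℕ} (z a : Fin d → ℤ) : ℤ ×ₗ Lex (Fin d → ℤ) :=
  toLex (∑ i, z i * a i, toLex a)

/-- The configuration in which exactly the particles of `A` of key below that of `a` have
already been moved by `jumpMap z`. -/
noncomputable def partialJump {d : ℕ} (z a : Fin d → ℤ) (A : Finset (Fin d → ℤ)) : Finset (Fin d → ℤ) :=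
  (A.filter (fun b => jumpKey z b < jumpKey z a)).image (jumpMap z) ∪
    (A \ A.filter (fun b => jumpKey z b < jumpKey z a))

lemma jumpKey_injective {d : ℕ} (z : Fin d → ℤ) : Function.Injective (jumpKey z) := by
  intro a b h
  have h2 : (ofLex (jumpKey z a)).2 = (ofLex (jumpKey z b)).2 := by rw [h]
  exact toLex.injective h2

lemma jumpKey_jumpMap_lt {d : ℕ} {z : Fin d → ℤ} (hz : z ≠ 0) (a : Fin d → ℤ) :
    jumpKey z (jumpMap z a) < jumpKey z a := by
  have hpos : 0 < ∑ i, z i * z i := by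
    obtain ⟨i, hi⟩ := Function.ne_iff.mp hz
    exact Finset.sum_pos' (fun j _ => mul_self_nonneg _)
      ⟨i, Finset.mem_univ i, mul_self_pos.mpr hi⟩
  refine Prod.Lex.toLex_lt_toLex.mpr (Or.inl ?_)
  by_cases h : a = z
  · subst h
    simp only [jumpMap, if_true, Pi.neg_apply, mul_neg, Finset.sum_neg_distrib]
    linarith
  · simp only [jumpMap, if_neg h, Pi.sub_apply, mul_sub, Finset.sum_sub_distrib]
    linarith

lemma jumpMap_ne_zero {d : ℕ} {z a : Fin d → ℤ} (ha : a ≠ 0) : jumpMap z a ≠ 0 := by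
  unfold jumpMap
  split_ifs with h
  · subst h; exact neg_ne_zero.mpr ha
  · exact sub_ne_zero.mpr h

lemma jumpMap_inj {d : ℕ} {z a b : Fin d → ℤ} (ha : a ≠ 0) (hb : b ≠ 0)
    (h : jumpMap z a = jumpMap z b) : a = b := by
  unfold jumpMap at h
  split_ifs at h with h1 h2 h2
  · rw [h1, h2]
  · exact absurd (by simpa [sub_eq_add_neg] using h) hb
  · exact absurd (by simpa [sub_eq_add_neg] using h) ha
  · exact sub_left_injective h

lemma shiftSet_eq_image {d : ℕ} (z : Fin d → ℤ) {A : Finset (Fin d → ℤ)} (hA : 0 ∉ A) :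
    shiftSet z A = A.image (jumpMap z) := by
  ext b
  unfold shiftSet
  split_ifs with hz
  · simp only [Finset.mem_insert, Finset.mem_erase, Finset.mem_image]
    constructor
    · rintro (rfl | ⟨hb, a, ha, rfl⟩)
      · exact ⟨z, hz, by simp [jumpMap]⟩
      · exact ⟨a, ha, by rw [jumpMap, if_neg (sub_ne_zero.mp hb)]⟩
    · rintro ⟨a, ha, rfl⟩
      by_cases h : a = z
      · left; simp [jumpMap, h]
      · right
        exact ⟨jumpMap_ne_zero (fun h0 => hA (h0 ▸ ha)), a, ha, by rw [jumpMap, if_neg h]⟩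
  · simp only [Finset.mem_image]
    refine exists_congr fun a => and_congr_right fun ha => ?_
    rw [jumpMap, if_neg (ne_of_mem_of_not_mem ha hz)]

lemma mem_partialJump {d : ℕ} {z a b : Fin d → ℤ} {A : Finset (Fin d → ℤ)} :
    b ∈ partialJump z a A ↔
      (∃ c ∈ A, jumpKey z c < jumpKey z a ∧ jumpMap z c = b) ∨
        (b ∈ A ∧ ¬ jumpKey z b < jumpKey z a) := by
  simp only [partialJump, Finset.mem_union, Finset.mem_image, Finset.mem_filter,
    Finset.mem_sdiff, and_assoc]
  refine or_congr_right (and_congr_right fun h => ?_)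
  rw [not_and, forall_prop_of_true h]

lemma zero_notMem_partialJump {d : ℕ} {z a : Fin d → ℤ} {A : Finset (Fin d → ℤ)} (hA : 0 ∉ A) :
    0 ∉ partialJump z a A := by
  rw [mem_partialJump]
  rintro (⟨c, hc, -, h⟩ | ⟨h, -⟩)
  · exact jumpMap_ne_zero (fun h0 => hA (h0 ▸ hc)) h
  · exact hA h

lemma card_partialJump {d : ℕ} {z a : Fin d → ℤ} (hz : z ≠ 0) {A : Finset (Fin d → ℤ)}
    (hA : 0 ∉ A) : (partialJump z a A).card = A.card := by
  unfold partialJump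
  rw [Finset.card_union_of_disjoint, Finset.card_image_of_injOn, add_comm,
    Finset.card_sdiff_add_card_eq_card (Finset.filter_subset _ _)]
  · intro b hb c hc h
    simp only [Finset.mem_coe, Finset.mem_filter] at hb hc
    exact jumpMap_inj (fun h0 => hA (h0 ▸ hb.1)) (fun h0 => hA (h0 ▸ hc.1)) h
  · rw [Finset.disjoint_left]
    intro b hb hb'
    simp only [Finset.mem_image, Finset.mem_filter, Finset.mem_sdiff, not_and] at hb hb'
    obtain ⟨c, ⟨-, hc⟩, rfl⟩ := hb
    exact hb'.2 hb'.1 ((jumpKey_jumpMap_lt hz c).trans hc)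

lemma mem_iff_of_partialJump {d : ℕ} {z a b : Fin d → ℤ} (hz : z ≠ 0)
    {A : Finset (Fin d → ℤ)} (hA : 0 ∉ A) (hb : b ≠ 0) :
    b ∈ A ↔ (jumpKey z b < jumpKey z a ∧ jumpMap z b ∈ partialJump z a A) ∨
      (¬ jumpKey z b < jumpKey z a ∧ b ∈ partialJump z a A) := by
  simp only [mem_partialJump]
  constructor
  · intro h
    by_cases hk : jumpKey z b < jumpKey z a
    · exact Or.inl ⟨hk, Or.inl ⟨b, h, hk, rfl⟩⟩
    · exact Or.inr ⟨hk, Or.inr ⟨h, hk⟩⟩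
  · rintro (⟨hk, (⟨c, hc, -, h⟩ | ⟨-, h⟩)⟩ | ⟨hk, (⟨c, -, hc, rfl⟩ | ⟨h, -⟩)⟩)
    · exact jumpMap_inj (fun h0 => hA (h0 ▸ hc)) hb h ▸ hc
    · exact absurd ((jumpKey_jumpMap_lt hz b).trans hk) h
    · exact absurd ((jumpKey_jumpMap_lt hz c).trans hc) hk
    · exact h

lemma partialJump_inj {d : ℕ} {z a : Fin d → ℤ} (hz : z ≠ 0) {A B : Finset (Fin d → ℤ)}
    (hA : 0 ∉ A) (hB : 0 ∉ B) (h : partialJump z a A = partialJump z a B) : A = B := by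
  ext b
  by_cases hb : b = 0
  · subst hb; simp [hA, hB]
  · rw [mem_iff_of_partialJump (a := a) hz hA hb, h, ← mem_iff_of_partialJump hz hB hb]

lemma swapSet_partialJump {d : ℕ} {z a : Fin d → ℤ} (hz : z ≠ 0) {A : Finset (Fin d → ℤ)}
    (hA : 0 ∉ A) (ha : a ∈ A) :
    swapSet a (jumpMap z a) (partialJump z a A) =
      (insert a (A.filter (fun b => jumpKey z b < jumpKey z a))).image (jumpMap z) ∪
        (A \ insert a (A.filter (fun b => jumpKey z b < jumpKey z a))) := by
  have ha0 : a ≠ 0 := fun h0 => hA (h0 ▸ ha)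
  have h1 : a ∈ partialJump z a A := mem_partialJump.mpr (Or.inr ⟨ha, lt_irrefl _⟩)
  have h2 : jumpMap z a ∉ partialJump z a A := by
    rw [mem_partialJump]
    rintro (⟨c, hc, hk, h⟩ | ⟨-, h⟩)
    · rw [jumpMap_inj (fun h0 => hA (h0 ▸ hc)) ha0 h] at hk
      exact lt_irrefl _ hk
    · exact h (jumpKey_jumpMap_lt hz a)
  have h3 : a ∉ (A.filter (fun b => jumpKey z b < jumpKey z a)).image (jumpMap z) := by
    simp only [Finset.mem_image, Finset.mem_filter, not_exists, not_and]
    rintro c ⟨-, hc⟩ h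
    have := jumpKey_jumpMap_lt hz c
    rw [h] at this
    exact lt_asymm hc this
  rw [swapSet, if_pos ⟨h1, h2⟩, partialJump, Finset.erase_union_distrib,
    Finset.erase_eq_of_notMem h3, Finset.image_insert, Finset.insert_union,
    Finset.sdiff_insert]

lemma Finset.sub_empty_eq_sum_filter_lt {X L : Type*} [DecidableEq X] [LinearOrder L]
    {key : X → L} (hkey : Function.Injective key) (g : Finset X → ℝ) (A : Finset X) :
    g A - g ∅ = ∑ a ∈ A, (g (insert a (A.filter (fun b => key b < key a))) -
      g (A.filter (fun b => key b < key a))) := by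
  induction A using Finset.induction_on_max_value key with
  | empty => simp
  | insert m A hm hmax ih =>
    have hlt : ∀ b ∈ A, key b < key m := fun b hb =>
      lt_of_le_of_ne (hmax b hb) (fun h => hm (hkey h ▸ hb))
    rw [Finset.sum_insert hm]
    have h1 : (insert m A).filter (fun b => key b < key m) = A := by
      rw [Finset.filter_insert, if_neg (lt_irrefl _), Finset.filter_true_of_mem hlt]
    have h2 : ∀ a ∈ A, (insert m A).filter (fun b => key b < key a) =
        A.filter (fun b => key b < key a) := fun a ha => by
      rw [Finset.filter_insert, if_neg (hlt a ha).not_gt]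
    rw [h1, Finset.sum_congr rfl (fun a ha => by rw [h2 a ha]), ← ih]
    ring

lemma sq_sub_shiftSet_le {d : ℕ} {z : Fin d → ℤ} (hz : z ≠ 0) {A : Finset (Fin d → ℤ)}
    (hA : 0 ∉ A) (f : Finset (Fin d → ℤ) → ℝ) :
    (f (shiftSet z A) - f A) ^ 2 ≤ A.card * ∑ a ∈ A,
      (f (swapSet a (jumpMap z a) (partialJump z a A)) - f (partialJump z a A)) ^ 2 := by
  have h := Finset.sub_empty_eq_sum_filter_lt (jumpKey_injective z)
    (fun S => f (S.image (jumpMap z) ∪ (A \ S))) A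
  simp only [Finset.sdiff_self, Finset.union_empty, Finset.image_empty, Finset.sdiff_empty,
    Finset.empty_union] at h
  rw [shiftSet_eq_image z hA, h]
  refine sq_sum_le_card_mul_sum_sq.trans_eq ?_
  congr 1
  refine Finset.sum_congr rfl fun a ha => ?_
  rw [swapSet_partialJump hz hA ha, partialJump]

lemma znorm_smul {d : ℕ} (k : ℤ) (z : Fin d → ℤ) : znorm d (k • z) = |(k : ℝ)| * znorm d z := by
  unfold znorm
  rw [← Real.sqrt_sq_eq_abs, ← Real.sqrt_mul (sq_nonneg _), Finset.mul_sum]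
  simp [mul_pow]

lemma sstar_nonneg (d : ℕ) (α : ℝ) : 0 ≤ sstar d α := by
  refine tsum_nonneg fun x => ?_
  split_ifs
  · exact le_rfl
  · exact Real.rpow_nonneg (Real.sqrt_nonneg _) _

lemma sfun_nonneg (d : ℕ) (α : ℝ) (x : Fin d → ℤ) : 0 ≤ sfun d α x := by
  unfold sfun
  split_ifs
  · exact le_rfl
  · exact div_nonneg (Real.rpow_nonneg (Real.sqrt_nonneg _) _) (sstar_nonneg d α)

lemma sfun_smul {d : ℕ} (α : ℝ) {k : ℤ} (hk : k ≠ 0) (z : Fin d → ℤ) :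
    sfun d α (k • z) = |(k : ℝ)| ^ (-((d : ℝ) + α)) * sfun d α z := by
  by_cases hz : z = 0
  · simp [sfun, hz]
  · rw [sfun, sfun, if_neg (smul_ne_zero hk hz), if_neg hz, znorm_smul,
      Real.mul_rpow (abs_nonneg _) (by exact Real.sqrt_nonneg _), mul_div_assoc]

lemma sfun_neg {d : ℕ} (α : ℝ) (z : Fin d → ℤ) : sfun d α (-z) = sfun d α z := by
  simpa using sfun_smul α (show (-1 : ℤ) ≠ 0 by decide) z

lemma summable_sfun (d : ℕ) (α : ℝ) : Summable (sfun d α) := by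
  have h : sfun d α = fun x =>
      (if x = 0 then 0 else znorm d x ^ (-((d : ℝ) + α))) / sstar d α := by
    ext x
    unfold sfun
    split_ifs <;> simp
  rw [h]
  by_cases hs : Summable fun x : Fin d → ℤ =>
      if x = 0 then (0 : ℝ) else znorm d x ^ (-((d : ℝ) + α))
  · exact hs.div_const _
  · have : sstar d α = 0 := tsum_eq_zero_of_not_summable hs
    simp [this, summable_zero]

lemma sfun_le_jumpMap {d : ℕ} {α : ℝ} (hα : 0 < α) (z a : Fin d → ℤ) :
    sfun d α z ≤ 2 ^ ((d : ℝ) + α) * sfun d α (jumpMap z a - a) := by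
  have hexp : (0 : ℝ) ≤ (d : ℝ) + α := by positivity
  unfold jumpMap
  split_ifs with h
  · subst h
    have : -a - a = (-2 : ℤ) • a := by
      ext i; simp; ring
    rw [this, sfun_smul α (by decide)]
    simp only [Int.cast_neg, Int.cast_ofNat, abs_neg, Nat.abs_ofNat]
    rw [← mul_assoc, ← Real.rpow_add two_pos, add_neg_cancel, Real.rpow_zero, one_mul]
  · rw [show a - z - a = -z by abel, sfun_neg]
    exact le_mul_of_one_le_left (sfun_nonneg d α z) (Real.one_le_rpow one_le_two hexp)

lemma tsum_shiftSet_le {d n : ℕ} {α : ℝ} (hα : 0 < α) {z : Fin d → ℤ} (hz : z ≠ 0)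
    (f : Finset (Fin d → ℤ) → ℝ) :
    ∑' A : {A : Finset (Fin d → ℤ) // A.card = n ∧ (0 : Fin d → ℤ) ∉ A},
        ENNReal.ofReal (sfun d α z * (f (shiftSet z A.1) - f A.1) ^ 2) ≤
      ENNReal.ofReal (n * 2 ^ ((d : ℝ) + α)) * ∑' a : Fin d → ℤ,
        ∑' A : {A : Finset (Fin d → ℤ) // A.card = n ∧ (0 : Fin d → ℤ) ∉ A},
          ENNReal.ofReal (if a ≠ 0 ∧ jumpMap z a ≠ 0 then
            sfun d α (jumpMap z a - a) * (f (swapSet a (jumpMap z a) A.1) - f A.1) ^ 2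
            else 0) := by
  set T : (Fin d → ℤ) → Finset (Fin d → ℤ) → ℝ := fun a A =>
    if a ≠ 0 ∧ jumpMap z a ≠ 0 then
      sfun d α (jumpMap z a - a) * (f (swapSet a (jumpMap z a) A) - f A) ^ 2 else 0 with hT
  have hT0 : ∀ a A, 0 ≤ T a A := fun a A => by
    rw [hT]
    dsimp only
    split_ifs
    · exact mul_nonneg (sfun_nonneg _ _ _) (sq_nonneg _)
    · exact le_rfl
  have hc : (0 : ℝ) ≤ n * 2 ^ ((d : ℝ) + α) := by positivity
  calc _ ≤ ∑' A : {A : Finset (Fin d → ℤ) // A.card = n ∧ (0 : Fin d → ℤ) ∉ A},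
        ENNReal.ofReal (n * 2 ^ ((d : ℝ) + α)) *
          ∑' a : Fin d → ℤ, ENNReal.ofReal (T a (partialJump z a A.1)) := by
        refine ENNReal.tsum_le_tsum fun ⟨A, hcard, hA⟩ => ?_
        have hreal : sfun d α z * (f (shiftSet z A) - f A) ^ 2 ≤
            n * 2 ^ ((d : ℝ) + α) * ∑ a ∈ A, T a (partialJump z a A) := by
          calc _ ≤ sfun d α z * (A.card * ∑ a ∈ A,
                (f (swapSet a (jumpMap z a) (partialJump z a A)) -
                  f (partialJump z a A)) ^ 2) :=
                mul_le_mul_of_nonneg_left (sq_sub_shiftSet_le hz hA f) (sfun_nonneg _ _ _)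
            _ = n * ∑ a ∈ A, sfun d α z *
                (f (swapSet a (jumpMap z a) (partialJump z a A)) -
                  f (partialJump z a A)) ^ 2 := by
                rw [hcard, ← Finset.mul_sum]; ring
            _ ≤ n * ∑ a ∈ A, 2 ^ ((d : ℝ) + α) * T a (partialJump z a A) := by
                refine mul_le_mul_of_nonneg_left (Finset.sum_le_sum fun a ha => ?_)
                  (Nat.cast_nonneg n)
                have ha0 : a ≠ 0 := fun h0 => hA (h0 ▸ ha)
                rw [hT]
                dsimp only
                rw [if_pos ⟨ha0, jumpMap_ne_zero ha0⟩, ← mul_assoc]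
                exact mul_le_mul_of_nonneg_right (sfun_le_jumpMap hα z a) (sq_nonneg _)
            _ = _ := by rw [← Finset.mul_sum, mul_assoc]
        refine (ENNReal.ofReal_le_ofReal hreal).trans ?_
        rw [ENNReal.ofReal_mul hc, ENNReal.ofReal_sum_of_nonneg fun a _ => hT0 _ _]
        gcongr
        exact ENNReal.sum_le_tsum A
    _ = ENNReal.ofReal (n * 2 ^ ((d : ℝ) + α)) * ∑' a : Fin d → ℤ,
        ∑' A : {A : Finset (Fin d → ℤ) // A.card = n ∧ (0 : Fin d → ℤ) ∉ A},
          ENNReal.ofReal (T a (partialJump z a A.1)) := by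
        rw [ENNReal.tsum_mul_left, ENNReal.tsum_comm]
    _ ≤ _ := by
        refine mul_le_mul_right (ENNReal.tsum_le_tsum fun a => ?_) _
        let φ : {A : Finset (Fin d → ℤ) // A.card = n ∧ (0 : Fin d → ℤ) ∉ A} →
            {A : Finset (Fin d → ℤ) // A.card = n ∧ (0 : Fin d → ℤ) ∉ A} := fun A =>
          ⟨partialJump z a A.1, (card_partialJump hz A.2.2).trans A.2.1,
            zero_notMem_partialJump A.2.2⟩
        have hφ : Function.Injective φ := fun A B h =>
          Subtype.ext (partialJump_inj hz A.2.2 B.2.2 (congrArg Subtype.val h))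
        exact ENNReal.tsum_comp_le_tsum_of_injective hφ fun A => ENNReal.ofReal (T a A.1)

lemma tsum_tsum_jumpMap_le {d : ℕ} (H : (Fin d → ℤ) → (Fin d → ℤ) → ℝ≥0∞) :
    ∑' z : Fin d → ℤ, ∑' a : Fin d → ℤ, H a (jumpMap z a) ≤ 2 * ∑' x, ∑' y, H x y := by
  calc _ ≤ ∑' z : Fin d → ℤ, ∑' a : Fin d → ℤ, (H a (a - z) + if a = z then H z (-z) else 0) := by
        gcongr with z a
        unfold jumpMap
        split_ifs with h
        · subst h; exact le_add_self
        · exact le_self_add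
    _ = (∑' a : Fin d → ℤ, ∑' z : Fin d → ℤ, H a (a - z)) + ∑' z : Fin d → ℤ, H z (-z) := by
        simp_rw [ENNReal.tsum_add, tsum_ite_eq]
        rw [ENNReal.tsum_comm]
    _ ≤ (∑' x, ∑' y, H x y) + ∑' x, ∑' y, H x y := by
        refine add_le_add (le_of_eq ?_) ?_
        · exact tsum_congr fun a => (Equiv.subLeft a).tsum_eq (H a)
        · exact ENNReal.tsum_le_tsum fun z => ENNReal.le_tsum (-z)
    _ = _ := (two_mul _).symm

lemma swapSet_involutive {d : ℕ} (x y : Fin d → ℤ) : Function.Involutive (swapSet x y) := by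
  intro A
  by_cases hxy : x = y
  · subst hxy; simp [swapSet]
  ext b
  by_cases hx : x ∈ A <;> by_cases hy : y ∈ A <;>
    simp [swapSet, hx, hy, hxy, Ne.symm hxy]

lemma swapSet_xor {d : ℕ} (x y : Fin d → ℤ) (A : Finset (Fin d → ℤ)) :
    (x ∈ swapSet x y A ∧ y ∉ swapSet x y A ∨ y ∈ swapSet x y A ∧ x ∉ swapSet x y A) ↔
      (x ∈ A ∧ y ∉ A ∨ y ∈ A ∧ x ∉ A) := by
  unfold swapSet
  grind

lemma tsum_tsum_mem_mul_le {d : ℕ} (S : (Fin d → ℤ) → ℝ≥0∞) (hS : ∀ z, S (-z) = S z)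
    (A : Finset (Fin d → ℤ)) :
    ∑' x : Fin d → ℤ, ∑' y : Fin d → ℤ,
        (if x ∈ A ∧ y ∉ A ∨ y ∈ A ∧ x ∉ A then S (y - x) else 0) ≤
      2 * (A.card * ∑' z, S z) := by
  have key : ∑' x : Fin d → ℤ, ∑' y : Fin d → ℤ, (if x ∈ A then S (y - x) else 0) =
      A.card * ∑' z, S z := by
    have h : ∀ x : Fin d → ℤ, ∑' y : Fin d → ℤ, (if x ∈ A then S (y - x) else 0) =
        if x ∈ A then ∑' z, S z else 0 := fun x => by
      split_ifs
      · exact (Equiv.subRight x).tsum_eq S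
      · simp
    simp_rw [h]
    rw [tsum_eq_sum (s := A) (fun x hx => if_neg hx), Finset.sum_ite_mem, Finset.inter_self,
      Finset.sum_const, nsmul_eq_mul]
  calc _ ≤ ∑' x : Fin d → ℤ, ∑' y : Fin d → ℤ,
        ((if x ∈ A then S (y - x) else 0) + if y ∈ A then S (x - y) else 0) := by
        gcongr with x y
        rw [← hS (x - y), neg_sub]
        split_ifs <;> simp_all
    _ = _ := by
        simp_rw [ENNReal.tsum_add]
        rw [ENNReal.tsum_comm (f := fun x y => if y ∈ A then S (x - y) else 0), key, two_mul]

lemma tsum_swapSet_ne_top (d n : ℕ) (α : ℝ) {f : Finset (Fin d → ℤ) → ℝ}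
    (hf : (Function.support f).Finite) :
    ∑' x : Fin d → ℤ, ∑' y : Fin d → ℤ,
      ∑' A : {A : Finset (Fin d → ℤ) // A.card = n ∧ (0 : Fin d → ℤ) ∉ A},
        ENNReal.ofReal (if x ≠ 0 ∧ y ≠ 0 then
          sfun d α (y - x) * (f (swapSet x y A.1) - f A.1) ^ 2 else 0) ≠ ∞ := by
  set S : (Fin d → ℤ) → ℝ≥0∞ := fun z => ENNReal.ofReal (sfun d α z) with hS
  set w : Finset (Fin d → ℤ) → ℝ≥0∞ := fun A => ENNReal.ofReal (2 * f A ^ 2) with hw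
  set G : (Fin d → ℤ) → (Fin d → ℤ) → Finset (Fin d → ℤ) → ℝ≥0∞ := fun x y A =>
    w A * if x ∈ A ∧ y ∉ A ∨ y ∈ A ∧ x ∉ A then S (y - x) else 0 with hG
  have hterm : ∀ x y A, ENNReal.ofReal (if x ≠ 0 ∧ y ≠ 0 then
      sfun d α (y - x) * (f (swapSet x y A) - f A) ^ 2 else 0) ≤
        G x y (swapSet x y A) + G x y A := by
    intro x y A
    simp only [hG, swapSet_xor]
    by_cases hχ : x ∈ A ∧ y ∉ A ∨ y ∈ A ∧ x ∉ A
    · simp only [if_pos hχ, hw, hS]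
      rw [← add_mul, ← ENNReal.ofReal_add (by positivity) (by positivity),
        ← ENNReal.ofReal_mul (by positivity)]
      refine ENNReal.ofReal_le_ofReal ?_
      have hs := sfun_nonneg d α (y - x)
      split_ifs
      · rw [mul_comm]
        refine mul_le_mul_of_nonneg_right ?_ hs
        nlinarith [sq_nonneg (f (swapSet x y A) + f A)]
      · positivity
    · have hA : swapSet x y A = A := by
        rw [swapSet, if_neg (fun h => hχ (Or.inl h)), if_neg (fun h => hχ (Or.inr h))]
      simp [hA]
  have hsum : ∑' z, S z ≠ ∞ := (summable_sfun d α).tsum_ofReal_ne_top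
  have hbound : ∑' x : Fin d → ℤ, ∑' y : Fin d → ℤ,
      ∑' A : {A : Finset (Fin d → ℤ) // A.card = n ∧ (0 : Fin d → ℤ) ∉ A},
        ENNReal.ofReal (if x ≠ 0 ∧ y ≠ 0 then
          sfun d α (y - x) * (f (swapSet x y A.1) - f A.1) ^ 2 else 0) ≤
      2 * ∑' A, w A * (2 * (A.card * ∑' z, S z)) := by
    calc _ ≤ ∑' x : Fin d → ℤ, ∑' y : Fin d → ℤ, 2 * ∑' A, G x y A := by
          gcongr with x y
          calc _ ≤ ∑' A : {A : Finset (Fin d → ℤ) // A.card = n ∧ (0 : Fin d → ℤ) ∉ A},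
                (G x y (swapSet x y A.1) + G x y A.1) :=
                ENNReal.tsum_le_tsum fun A => hterm x y A.1
            _ ≤ ∑' A, (G x y (swapSet x y A) + G x y A) :=
                ENNReal.tsum_comp_le_tsum_of_injective Subtype.val_injective
                  fun A => G x y (swapSet x y A) + G x y A
            _ = _ := by
                rw [ENNReal.tsum_add, two_mul]
                congr 1
                exact (swapSet_involutive x y).toPerm.tsum_eq (G x y)
      _ = 2 * ∑' A, w A * ∑' x : Fin d → ℤ, ∑' y : Fin d → ℤ,
            (if x ∈ A ∧ y ∉ A ∨ y ∈ A ∧ x ∉ A then S (y - x) else 0) := by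
          simp_rw [ENNReal.tsum_mul_left]
          congr 1
          simp_rw [← ENNReal.tsum_mul_left]
          rw [ENNReal.tsum_comm]
          conv_rhs => rw [ENNReal.tsum_comm]
          rw [ENNReal.tsum_comm]
          exact tsum_congr fun x => ENNReal.tsum_comm
      _ ≤ _ := by
          gcongr with A
          exact tsum_tsum_mem_mul_le S (fun z => by simp only [hS, sfun_neg]) A
  refine ne_top_of_le_ne_top (ENNReal.mul_ne_top (by simp) ?_) hbound
  rw [tsum_eq_sum (s := hf.toFinset)]
  · refine ENNReal.sum_ne_top.mpr fun A _ => ENNReal.mul_ne_top ENNReal.ofReal_ne_top ?_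
    exact ENNReal.mul_ne_top (by simp) (ENNReal.mul_ne_top (by simp) hsum)
  · intro A hA
    have : f A = 0 := by simpa using hA
    simp [hw, this]

/-- comparison of the "tagged-jump" Dirichlet form with the "exchange"
Dirichlet form on the level of coefficient functions of degree `n`: there is
`C = C(d,n,α)` with
`Σ_{z≠0} Σ_{A∈ℰ_{d,n}} s(z)(𝔣(θ_{−z}A) − 𝔣(A))²
  ≤ C Σ_{x,y≠0} Σ_{A∈ℰ_{d,n}} s(y−x)(𝔣(A_{x,y}) − 𝔣(A))²`. -/
theorem statement17 (d n : ℕ) (hd : 1 ≤ d) (hn : 1 ≤ n) (α : ℝ) (hα : 0 < α) :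
    ∃ C : ℝ, ∀ f : Finset (Fin d → ℤ) → ℝ, (Function.support f).Finite →
      (∑' z : Fin d → ℤ,
        ∑' A : {A : Finset (Fin d → ℤ) // A.card = n ∧ (0 : Fin d → ℤ) ∉ A},
          sfun d α z * (f (shiftSet z A.1) - f A.1) ^ 2)
      ≤ C * ∑' x : Fin d → ℤ, ∑' y : Fin d → ℤ,
          ∑' A : {A : Finset (Fin d → ℤ) // A.card = n ∧ (0 : Fin d → ℤ) ∉ A},
            (if x ≠ 0 ∧ y ≠ 0 then
              sfun d α (y - x) * (f (swapSet x y A.1) - f A.1) ^ 2 else 0) := by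
  have hc : (0 : ℝ) ≤ n * 2 ^ ((d : ℝ) + α) := by positivity
  refine ⟨n * 2 ^ ((d : ℝ) + α) * 2, fun f hf => ?_⟩
  have hR0 : ∀ (x y : Fin d → ℤ) (A : Finset (Fin d → ℤ)), 0 ≤ (if x ≠ 0 ∧ y ≠ 0 then
      sfun d α (y - x) * (f (swapSet x y A) - f A) ^ 2 else 0) := fun x y A => by
    split_ifs
    · exact mul_nonneg (sfun_nonneg _ _ _) (sq_nonneg _)
    · exact le_rfl
  have hL0 : ∀ (z : Fin d → ℤ) (A : Finset (Fin d → ℤ)),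
      0 ≤ sfun d α z * (f (shiftSet z A) - f A) ^ 2 := fun z A =>
    mul_nonneg (sfun_nonneg _ _ _) (sq_nonneg _)
  have hR := tsum_swapSet_ne_top d n α hf
  have hle : ∑' z : Fin d → ℤ,
      ∑' A : {A : Finset (Fin d → ℤ) // A.card = n ∧ (0 : Fin d → ℤ) ∉ A},
        ENNReal.ofReal (sfun d α z * (f (shiftSet z A.1) - f A.1) ^ 2) ≤
      ENNReal.ofReal (n * 2 ^ ((d : ℝ) + α) * 2) * ∑' x : Fin d → ℤ, ∑' y : Fin d → ℤ,
        ∑' A : {A : Finset (Fin d → ℤ) // A.card = n ∧ (0 : Fin d → ℤ) ∉ A},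
          ENNReal.ofReal (if x ≠ 0 ∧ y ≠ 0 then
            sfun d α (y - x) * (f (swapSet x y A.1) - f A.1) ^ 2 else 0) := by
    calc _ ≤ ∑' z : Fin d → ℤ, ENNReal.ofReal (n * 2 ^ ((d : ℝ) + α)) * ∑' a : Fin d → ℤ,
          ∑' A : {A : Finset (Fin d → ℤ) // A.card = n ∧ (0 : Fin d → ℤ) ∉ A},
            ENNReal.ofReal (if a ≠ 0 ∧ jumpMap z a ≠ 0 then
              sfun d α (jumpMap z a - a) * (f (swapSet a (jumpMap z a) A.1) - f A.1) ^ 2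
              else 0) := by
          refine ENNReal.tsum_le_tsum fun z => ?_
          by_cases hz : z = 0
          · simp [hz, sfun]
          · exact tsum_shiftSet_le hα hz f
      _ ≤ _ := by
          rw [ENNReal.tsum_mul_left, ENNReal.ofReal_mul hc, ENNReal.ofReal_ofNat, mul_assoc]
          gcongr
          exact tsum_tsum_jumpMap_le fun x y =>
            ∑' A : {A : Finset (Fin d → ℤ) // A.card = n ∧ (0 : Fin d → ℤ) ∉ A},
              ENNReal.ofReal (if x ≠ 0 ∧ y ≠ 0 then
                sfun d α (y - x) * (f (swapSet x y A.1) - f A.1) ^ 2 else 0)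
  have htop := ENNReal.mul_ne_top (ENNReal.ofReal_ne_top (r := n * 2 ^ ((d : ℝ) + α) * 2)) hR
  have hL := ne_top_of_le_ne_top htop hle
  have hreal := ENNReal.toReal_mono htop hle
  rw [ENNReal.toReal_mul, ENNReal.toReal_ofReal (by positivity),
    ENNReal.tsum_toReal_eq (ENNReal.ne_top_of_tsum_ne_top hL),
    ENNReal.tsum_toReal_eq (ENNReal.ne_top_of_tsum_ne_top hR)] at hreal
  convert hreal using 2
  · ext z
    rw [ENNReal.tsum_toReal_eq fun _ => ENNReal.ofReal_ne_top]
    simp_rw [ENNReal.toReal_ofReal (hL0 _ _)]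
  · refine tsum_congr fun x => ?_
    rw [ENNReal.tsum_toReal_eq
      (ENNReal.ne_top_of_tsum_ne_top (ENNReal.ne_top_of_tsum_ne_top hR x))]
    refine tsum_congr fun y => ?_
    rw [ENNReal.tsum_toReal_eq fun _ => ENNReal.ofReal_ne_top]
    simp_rw [ENNReal.toReal_ofReal (hR0 _ _ _)]
end
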